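/- arXiv:math/0507435 — 2 statements merged into one kernel-verified Lean document; each statement's English description precedes it below -/
import Mathlib

section
/- Let g ∈ SL(n,ℂ) be such that δ^(s)_{1,…,s}(g) ≠ 0 for every s = 1,…,n−1. Then there exists an upper triangular matrix u with all diagonal entries equal to 1 such that g = g′·u, where g′ is the lower triangular matrix whose entries are g′_{jk} = δ^(k)_{1,…,k−1,j}(g)/δ^(k−1)_{1,…,k−1}(g) for all 1 ≤ k ≤ j ≤ n, and g′_{jk} = 0 for j < k. -/
open Matrix

/-- `leadingMinor g s` is `δ^(s)_{1,…,s}(g)`, the determinant of the top-left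
`s × s` submatrix of `g` (for `s ≤ n`).  For `s = 0` this is `1`. -/
noncomputable def leadingMinor {n : ℕ} (g : Matrix (Fin n) (Fin n) ℂ) (s : ℕ) : ℂ :=
  (Matrix.of fun k l : Fin (min s n) =>
    g (Fin.castLE (min_le_right s n) k) (Fin.castLE (min_le_right s n) l)).det

/-- `deltaCorner g k j` is `δ^(k)_{1,…,k−1,j}(g)`: the determinant of the
`k × k` matrix whose rows are the rows `1, …, k−1` of `g` followed by row `j`,
and whose columns are the first `k` columns of `g` (for `k ≤ n`; 0-based,
row index `a` with `a + 1 < k` gives row `a`, the last row is row `j`). -/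
noncomputable def deltaCorner {n : ℕ} (g : Matrix (Fin n) (Fin n) ℂ) (k : ℕ) (j : Fin n) : ℂ :=
  (Matrix.of fun a b : Fin (min k n) =>
    g (if (a : ℕ) + 1 < k then Fin.castLE (min_le_right k n) a else j)
      (Fin.castLE (min_le_right k n) b)).det

/-!
Expanding `δ^(k)_{1,…,k-1,j}(g)` along its last row gives a combination of the first `k` entries of
row `j` of `g` whose coefficients, cofactors of the leading `k × k` block, do not depend on `j`.
Collecting these coefficients as the `k`-th column of an upper triangular matrix `C`, the product
`g * C` has `(j, k)` entry `δ^(k)_{1,…,k-1,j}(g)`, which vanishes for `j < k` because a row is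
repeated, while `C` has diagonal entries `d_k = δ^(k-1)_{1,…,k-1}(g)`. Hence
`g = (g * C * D⁻¹) * (D * C⁻¹)` with `D = diag(d)`, and `D * C⁻¹` is upper unitriangular.
-/

lemma mul_apply_self_of_isUpperTriangular {ι R : Type*} [Fintype ι] [LinearOrder ι]
    [NonUnitalNonAssocSemiring R] {A B : Matrix ι ι R} (hA : A.IsUpperTriangular)
    (hB : B.IsUpperTriangular) (k : ι) : (A * B) k k = A k k * B k k := by
  rw [mul_apply]
  refine Fintype.sum_eq_single k fun l hl => ?_
  rcases lt_or_gt_of_ne hl with hlk | hkl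
  · rw [hA hlk, zero_mul]
  · rw [hB hkl, mul_zero]

section CommRing

variable {m R : Type*} [CommRing R] {n : ℕ}

/-- The minor `δ^(p)_{i₁,…,i_p}(g)` on the first `p` columns and the rows `i 0, …, i (p - 1)`, which
may come in any order and with repetitions. The bound `p ≤ n` is carried as an argument so that the
columns are selected without truncation. -/
def flagMinor (g : Matrix m (Fin n) R) {p : ℕ} (h : p ≤ n) (i : Fin p → m) : R :=
  (g.submatrix i (Fin.castLE h)).det

lemma flagMinor_eq_zero_of_eq (g : Matrix m (Fin n) R) {p : ℕ} (h : p ≤ n) {i : Fin p → m}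
    {a b : Fin p} (hab : a ≠ b) (hi : i a = i b) : flagMinor g h i = 0 :=
  det_zero_of_row_eq hab (funext fun c => by simp only [submatrix_apply, hi])

lemma flagMinor_update (g : Matrix m (Fin n) R) {p : ℕ} (h : p ≤ n) (i : Fin p → m) (a : Fin p)
    (j : m) :
    flagMinor g h (Function.update i a j) =
      ∑ b, g j (Fin.castLE h b) * (g.submatrix i (Fin.castLE h)).adjugate b a := by
  have hrow : g.submatrix (Function.update i a j) (Fin.castLE h) =
      (g.submatrix i (Fin.castLE h)).updateRow a fun b => g j (Fin.castLE h b) := by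
    ext c b
    rcases eq_or_ne c a with rfl | hc <;> simp [*]
  rw [flagMinor, hrow, ← cramer_transpose_apply, cramer_eq_adjugate_mulVec,
    ← adjugate_transpose, mulVec_transpose]
  rfl

lemma flagMinor_update_last_eq_zero (g : Matrix (Fin n) (Fin n) R) {j k : Fin n} (hjk : j < k) :
    flagMinor g k.isLt (Function.update (Fin.castLE k.isLt) (Fin.last k) j) = 0 := by
  let a : Fin (k + 1) := ⟨j, Nat.lt_succ_of_lt hjk⟩
  have ha : a ≠ Fin.last k := Fin.ne_of_lt hjk
  apply flagMinor_eq_zero_of_eq g k.isLt ha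
  rw [Function.update_of_ne ha, Function.update_self]
  rfl

/-- The upper triangular matrix whose `k`-th column lists the cofactors of the last row of the
top-left `(k + 1) × (k + 1)` block of `g` (`k` counted from `0`), padded with zeros. -/
def leadingCofactorMatrix (g : Matrix (Fin n) (Fin n) R) : Matrix (Fin n) (Fin n) R :=
  of fun l k =>
    if h : l ≤ k then
      (g.submatrix (Fin.castLE k.isLt) (Fin.castLE k.isLt)).adjugate ⟨l, Nat.lt_succ_of_le h⟩
        (Fin.last k)
    else 0

lemma leadingCofactorMatrix_isUpperTriangular (g : Matrix (Fin n) (Fin n) R) :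
    (leadingCofactorMatrix g).IsUpperTriangular :=
  fun _ _ hkl => dif_neg (not_le_of_gt hkl)

lemma leadingCofactorMatrix_apply_castLE (g : Matrix (Fin n) (Fin n) R) (k : Fin n)
    (b : Fin (k + 1)) :
    leadingCofactorMatrix g (Fin.castLE k.isLt b) k =
      (g.submatrix (Fin.castLE k.isLt) (Fin.castLE k.isLt)).adjugate b (Fin.last k) :=
  dif_pos (Nat.le_of_lt_succ b.isLt)

lemma leadingCofactorMatrix_apply_self (g : Matrix (Fin n) (Fin n) R) (k : Fin n) :
    leadingCofactorMatrix g k k = flagMinor g k.isLt.le (Fin.castLE k.isLt.le) := by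
  refine (leadingCofactorMatrix_apply_castLE g k (Fin.last k)).trans ?_
  rw [adjugate_fin_succ_eq_det_submatrix, Even.neg_one_pow ⟨_, rfl⟩, one_mul, Fin.succAbove_last]
  rfl

lemma mul_leadingCofactorMatrix_apply (g : Matrix (Fin n) (Fin n) R) (j k : Fin n) :
    (g * leadingCofactorMatrix g) j k =
      flagMinor g k.isLt (Function.update (Fin.castLE k.isLt) (Fin.last k) j) := by
  rw [flagMinor_update, mul_apply]
  refine (Fintype.sum_of_injective _ (Fin.castLE_injective k.isLt) _ _ (fun l hl => ?_)
    fun b => ?_).symm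
  · have hkl : k < l := lt_of_not_ge fun hlk => hl ⟨⟨l, Nat.lt_succ_of_le hlk⟩, rfl⟩
    rw [leadingCofactorMatrix_isUpperTriangular g hkl, mul_zero]
  · rw [leadingCofactorMatrix_apply_castLE]

lemma det_leadingCofactorMatrix (g : Matrix (Fin n) (Fin n) R) :
    (leadingCofactorMatrix g).det =
      ∏ k : Fin n, flagMinor g k.isLt.le (Fin.castLE k.isLt.le) := by
  simp only [det_of_isUpperTriangular (leadingCofactorMatrix_isUpperTriangular g),
    leadingCofactorMatrix_apply_self]

end CommRing

section Field

variable {K : Type*} [Field K] {n : ℕ}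

/-- The lower triangular factor `g′` of the Gauss decomposition of `g`, with entries the quotients
`δ^(k)_{1,…,k-1,j}(g) / δ^(k-1)_{1,…,k-1}(g)` for `k ≤ j`. Here `j` and `k` count from `1`, whereas
the indices in `Fin n` count from `0`. -/
def gaussLowerFactor (g : Matrix (Fin n) (Fin n) K) : Matrix (Fin n) (Fin n) K :=
  of fun j k =>
    if k ≤ j then
      flagMinor g k.isLt (Function.update (Fin.castLE k.isLt) (Fin.last k) j) /
        flagMinor g k.isLt.le (Fin.castLE k.isLt.le)
    else 0

lemma gaussLowerFactor_mul_diagonal {g : Matrix (Fin n) (Fin n) K}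
    (hg : ∀ k : Fin n, flagMinor g k.isLt.le (Fin.castLE k.isLt.le) ≠ 0) :
    (gaussLowerFactor g * diagonal fun k => flagMinor g k.isLt.le (Fin.castLE k.isLt.le)) =
      g * leadingCofactorMatrix g := by
  ext j k
  rw [mul_diagonal, mul_leadingCofactorMatrix_apply, gaussLowerFactor, of_apply]
  split_ifs with hkj
  · exact div_mul_cancel₀ _ (hg k)
  · rw [zero_mul, flagMinor_update_last_eq_zero g (lt_of_not_ge hkj)]

theorem gauss_lower_decomposition_general (g : Matrix (Fin n) (Fin n) K)
    (hg : ∀ k : Fin n, 1 ≤ (k : ℕ) → flagMinor g k.isLt.le (Fin.castLE k.isLt.le) ≠ 0) :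
    ∃ u : Matrix (Fin n) (Fin n) K,
      (∀ k, u k k = 1) ∧ (∀ k l : Fin n, l < k → u k l = 0) ∧ g = gaussLowerFactor g * u := by
  let C := leadingCofactorMatrix g
  let d : Fin n → K := fun k => flagMinor g k.isLt.le (Fin.castLE k.isLt.le)
  have d_ne_zero (k : Fin n) : d k ≠ 0 := by
    rcases Nat.eq_zero_or_pos k with hk | hk
    · have d_eq_one : d k = 1 := det_eq_one_of_card_eq_zero ((Fintype.card_fin _).trans hk)
      exact d_eq_one ▸ one_ne_zero
    · exact hg k hk
  have C_unit : IsUnit C.det := by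
    rw [det_leadingCofactorMatrix]
    exact (Finset.prod_ne_zero_iff.mpr fun k _ => d_ne_zero k).isUnit
  have C_upper : C.IsUpperTriangular := leadingCofactorMatrix_isUpperTriangular g
  have : Invertible C := invertibleOfIsUnitDet C C_unit
  have C_inv_upper : C⁻¹.IsUpperTriangular := blockTriangular_inv_of_blockTriangular C_upper
  refine ⟨diagonal d * C⁻¹, fun k => ?_, fun k l hlk => ?_, ?_⟩
  · have C_diag : C k k = d k := leadingCofactorMatrix_apply_self g k
    rw [diagonal_mul, ← C_diag, ← mul_apply_self_of_isUpperTriangular C_upper C_inv_upper,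
      mul_nonsing_inv C C_unit, one_apply_eq]
  · rw [diagonal_mul, C_inv_upper hlk, mul_zero]
  · rw [← Matrix.mul_assoc, gaussLowerFactor_mul_diagonal d_ne_zero,
      mul_nonsing_inv_cancel_right _ _ C_unit]

end Field

lemma leadingMinor_eq_flagMinor {n : ℕ} (g : Matrix (Fin n) (Fin n) ℂ) {s : ℕ} (hs : s ≤ n) :
    leadingMinor g s = flagMinor g hs (Fin.castLE hs) := by
  have hmin : min s n = s := min_eq_left hs
  rw [leadingMinor, ← det_submatrix_equiv_self (finCongr hmin).symm]
  rfl

lemma deltaCorner_succ_eq_flagMinor {n : ℕ} (g : Matrix (Fin n) (Fin n) ℂ) (j k : Fin n) :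
    deltaCorner g (k + 1) j =
      flagMinor g k.isLt (Function.update (Fin.castLE k.isLt) (Fin.last k) j) := by
  have hmin : min ((k : ℕ) + 1) n = k + 1 := min_eq_left k.isLt
  rw [deltaCorner, ← det_submatrix_equiv_self (finCongr hmin).symm, flagMinor]
  congr 1
  ext a b
  refine congrFun (congrArg g ?_) _
  rcases Fin.eq_castSucc_or_eq_last a with ⟨a, rfl⟩ | rfl
  · rw [Function.update_of_ne (Fin.castSucc_lt_last a).ne]
    exact if_pos (Nat.succ_lt_succ a.isLt)
  · rw [Function.update_self]
    exact if_neg (lt_irrefl _)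

/-- Gauss decomposition, lower triangular form: if `g ∈ SL(n, ℂ)` has all
leading principal minors `δ^(s)_{1,…,s}(g) ≠ 0` for `s = 1, …, n − 1`, then
`g = g′ · u` with `u` upper triangular with unit diagonal and `g′` the lower
triangular matrix with entries
`g′_{jk} = δ^(k)_{1,…,k−1,j}(g)/δ^(k−1)_{1,…,k−1}(g)` for `k ≤ j` and `0`
otherwise.  (0-based indices: `jj, kk` correspond to `j = jj + 1`,
`k = kk + 1`.) -/
theorem gauss_lower_decomposition (n : ℕ) (g : Matrix.SpecialLinearGroup (Fin n) ℂ)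
    (hg : ∀ s : ℕ, 1 ≤ s → s ≤ n - 1 →
      leadingMinor (g : Matrix (Fin n) (Fin n) ℂ) s ≠ 0) :
    ∃ u : Matrix (Fin n) (Fin n) ℂ,
      (∀ k, u k k = 1) ∧ (∀ k l : Fin n, l < k → u k l = 0) ∧
      (g : Matrix (Fin n) (Fin n) ℂ) =
        (Matrix.of fun jj kk : Fin n =>
          if (kk : ℕ) ≤ (jj : ℕ) then
            deltaCorner (g : Matrix (Fin n) (Fin n) ℂ) ((kk : ℕ) + 1) jj /
              leadingMinor (g : Matrix (Fin n) (Fin n) ℂ) (kk : ℕ)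
          else 0) * u := by
  have h := gauss_lower_decomposition_general (g : Matrix (Fin n) (Fin n) ℂ) fun k hk =>
    leadingMinor_eq_flagMinor _ k.isLt.le ▸ hg k hk (Nat.le_sub_one_of_lt k.isLt)
  simpa only [gaussLowerFactor, Fin.le_def, leadingMinor_eq_flagMinor _ (Fin.isLt _).le,
    deltaCorner_succ_eq_flagMinor] using h
end

section
/- Let f : SL(n,ℂ) → ℂ be the restriction to SL(n,ℂ) of a polynomial in the n² matrix entries, and suppose that f(ᵗn₁ · g · n₂) = f(g) for every g ∈ SL(n,ℂ) and all upper triangular matrices n₁, n₂ with unit diagonal. Then there exists a polynomial Φ ∈ ℂ[t₁,…,t_{n−1}] such that f(g) = Φ(δ^(1)_{1}(g), δ^(2)_{1,2}(g), …, δ^(n−1)_{1,…,n−1}(g)) for all g ∈ SL(n,ℂ). -/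
open Matrix

/-- Evaluation of a polynomial in the `n²` matrix entries at a matrix. -/
noncomputable def evalMat {n : ℕ} (F : MvPolynomial (Fin n × Fin n) ℂ)
    (M : Matrix (Fin n) (Fin n) ℂ) : ℂ :=
  MvPolynomial.eval (fun p => M p.1 p.2) F

/-!
A matrix whose leading principal minors are units is brought to diagonal form by a lower
unitriangular matrix on the left and an upper unitriangular one on the right, and the minors
determine the diagonal. Hence a bi-invariant function takes the same value at such a `g` in `SL(n)`
and at the matrix `minorSection` with the same minors, whose entries are polynomials in the minors.
The condition on the minors is dense: writing `g` as a product of transvections and a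
diagonal matrix and scaling the transvections by `x` gives a polynomial path in `SL(n)` from that
diagonal matrix at `x = 0` to `g` at `x = 1`. The minors are nonzero polynomials along the path, so
over an infinite field a polynomial identity extends from their common nonvanishing locus to `g`.
-/

section LeadingPrincipalMinor

variable {R S : Type*} [CommRing R] [CommRing S] {n s : ℕ}

/-- The leading principal minor of order `s ≤ n` of a matrix over a commutative ring. This is
`leadingMinor` over a general ring, with the bound on `s` as an argument in place of `min s n`. -/
def leadingPrincipalMinor (A : Matrix (Fin n) (Fin n) R) (s : ℕ) (h : s ≤ n) : R :=
  (A.submatrix (Fin.castLE h) (Fin.castLE h)).det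

lemma leadingPrincipalMinor_eq_leadingMinor (A : Matrix (Fin n) (Fin n) ℂ) (h : s ≤ n) :
    leadingPrincipalMinor A s h = leadingMinor A s := by
  have eq_of_order_eq : ∀ (m : ℕ) (hm : m ≤ n), s = m →
      leadingPrincipalMinor A s h = leadingPrincipalMinor A m hm := by
    rintro _ _ rfl
    rfl
  exact eq_of_order_eq _ (min_le_right s n) (min_eq_left h).symm

lemma leadingPrincipalMinor_zero (A : Matrix (Fin n) (Fin n) R) :
    leadingPrincipalMinor A 0 n.zero_le = 1 :=
  det_isEmpty

lemma leadingPrincipalMinor_self (A : Matrix (Fin n) (Fin n) R) :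
    leadingPrincipalMinor A n le_rfl = A.det :=
  rfl

lemma leadingPrincipalMinor_transpose (A : Matrix (Fin n) (Fin n) R) (h : s ≤ n) :
    leadingPrincipalMinor Aᵀ s h = leadingPrincipalMinor A s h :=
  det_transpose _

lemma leadingPrincipalMinor_mapMatrix (f : R →+* S) (A : Matrix (Fin n) (Fin n) R) (h : s ≤ n) :
    leadingPrincipalMinor (f.mapMatrix A) s h = f (leadingPrincipalMinor A s h) :=
  (f.map_det _).symm

lemma leadingPrincipalMinor_of_isUpperTriangular {T : Matrix (Fin n) (Fin n) R}
    (hT : T.IsUpperTriangular) (h : s ≤ n) :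
    leadingPrincipalMinor T s h = ∏ i : Fin s, T (Fin.castLE h i) (Fin.castLE h i) :=
  det_of_isUpperTriangular fun _ _ hij => hT hij

lemma isUnit_leadingPrincipalMinor_of_isUpperTriangular {T : Matrix (Fin n) (Fin n) R}
    (hT : T.IsUpperTriangular) (hdet : IsUnit T.det) (h : s ≤ n) :
    IsUnit (leadingPrincipalMinor T s h) := by
  rw [det_of_isUpperTriangular hT, IsUnit.prod_univ_iff] at hdet
  rw [leadingPrincipalMinor_of_isUpperTriangular hT, IsUnit.prod_univ_iff]
  exact fun i => hdet (Fin.castLE h i)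

lemma leadingPrincipalMinor_mul_of_isUpperTriangular (A : Matrix (Fin n) (Fin n) R)
    {T : Matrix (Fin n) (Fin n) R} (hT : T.IsUpperTriangular) (h : s ≤ n) :
    leadingPrincipalMinor (A * T) s h =
      leadingPrincipalMinor A s h * leadingPrincipalMinor T s h := by
  unfold leadingPrincipalMinor
  rw [← det_mul]
  congr 1
  ext i j
  refine (Fintype.sum_of_injective (Fin.castLE h) (Fin.castLE_injective h) _ _ ?_
    fun _ => rfl).symm
  intro k hk
  have hjk : Fin.castLE h j < k := by
    by_contra! hkj
    exact hk ⟨⟨k, lt_of_le_of_lt hkj j.isLt⟩, rfl⟩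
  exact mul_eq_zero_of_right _ (hT hjk)

lemma leadingPrincipalMinor_diagonal_succ (d : Fin n → R) (k : Fin n) :
    leadingPrincipalMinor (diagonal d) (k + 1) k.isLt =
      leadingPrincipalMinor (diagonal d) k k.isLt.le * d k := by
  simp only [leadingPrincipalMinor_of_isUpperTriangular (blockTriangular_diagonal d),
    diagonal_apply_eq]
  exact Fin.prod_univ_castSucc _

lemma diagonal_eq_of_leadingPrincipalMinor_eq {d e : Fin n → R}
    (hd : ∀ k : Fin n, IsUnit (leadingPrincipalMinor (diagonal d) k k.isLt.le))
    (hde : ∀ s (h : s ≤ n),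
      leadingPrincipalMinor (diagonal d) s h = leadingPrincipalMinor (diagonal e) s h) :
    d = e := by
  funext k
  have hk := hde (k + 1) k.isLt
  rw [leadingPrincipalMinor_diagonal_succ, leadingPrincipalMinor_diagonal_succ, ← hde] at hk
  exact (hd k).mul_left_cancel hk

end LeadingPrincipalMinor

section GaussDecomposition

variable {R : Type*} [CommRing R] {n s : ℕ}

/-- Upper triangular matrices with unit diagonal, the elements of the group `N` acting on both
sides. Lower unitriangular matrices are written as transposes of these. -/
structure IsUnitUpperTriangular {m R : Type*} [LT m] [Zero R] [One R] (U : Matrix m m R) :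
    Prop where
  apply_self : ∀ k, U k k = 1
  isUpperTriangular : U.IsUpperTriangular

namespace IsUnitUpperTriangular

variable {U : Matrix (Fin n) (Fin n) R}

lemma leadingPrincipalMinor_mul (hU : IsUnitUpperTriangular U) (A : Matrix (Fin n) (Fin n) R)
    (h : s ≤ n) : leadingPrincipalMinor (A * U) s h = leadingPrincipalMinor A s h := by
  rw [leadingPrincipalMinor_mul_of_isUpperTriangular A hU.isUpperTriangular,
    leadingPrincipalMinor_of_isUpperTriangular hU.isUpperTriangular,
    Finset.prod_eq_one fun _ _ => hU.apply_self _, mul_one]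

lemma leadingPrincipalMinor_transpose_mul (hU : IsUnitUpperTriangular U)
    (A : Matrix (Fin n) (Fin n) R) (h : s ≤ n) :
    leadingPrincipalMinor (Uᵀ * A) s h = leadingPrincipalMinor A s h := by
  rw [← leadingPrincipalMinor_transpose, transpose_mul, transpose_transpose,
    hU.leadingPrincipalMinor_mul, leadingPrincipalMinor_transpose]

end IsUnitUpperTriangular

lemma mulVec_extend_zero {l m p R : Type*} [Fintype m] [Fintype p] [NonUnitalNonAssocSemiring R]
    (A : Matrix l m R) {e : p → m} (he : e.Injective) (v : p → R) :
    A *ᵥ Function.extend e v 0 = A.submatrix id e *ᵥ v := by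
  ext i
  refine (Fintype.sum_of_injective e he _ _ (fun j hj => ?_) fun j => ?_).symm
  · exact mul_eq_zero_of_right _ (Function.extend_apply' _ _ _ hj)
  · exact congrArg (A i (e j) * ·) (he.extend_apply v 0 j).symm

lemma exists_mulVec_eq_zero_of_lt (A : Matrix (Fin n) (Fin n) R) (k : Fin n)
    (hk : IsUnit (leadingPrincipalMinor A k k.isLt.le)) :
    ∃ u : Fin n → R, u k = 1 ∧ (∀ i, k < i → u i = 0) ∧ ∀ i, i < k → (A *ᵥ u) i = 0 := by
  let e : Fin k → Fin n := Fin.castLE k.isLt.le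
  have he : e.Injective := Fin.castLE_injective _
  have not_mem_range : ∀ i, k ≤ i → ¬ ∃ j, e j = i := by
    rintro _ hi ⟨j, rfl⟩
    exact absurd j.isLt (not_lt.2 hi)
  let v : Fin k → R := -((A.submatrix e e)⁻¹ *ᵥ fun i => A (e i) k)
  have hv : A.submatrix e e *ᵥ v = -fun i => A (e i) k := by
    rw [mulVec_neg, mulVec_mulVec, mul_nonsing_inv _ hk, one_mulVec]
  refine ⟨Function.extend e v 0 + Pi.single k 1, ?_, fun i hi => ?_, fun i hi => ?_⟩
  · rw [Pi.add_apply, Function.extend_apply' _ _ _ (not_mem_range k le_rfl), Pi.zero_apply,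
      zero_add, Pi.single_eq_same]
  · rw [Pi.add_apply, Function.extend_apply' _ _ _ (not_mem_range i hi.le), Pi.zero_apply,
      zero_add, Pi.single_eq_of_ne hi.ne']
  · have hvi : (A.submatrix id e *ᵥ v) i = -A i k := congrFun hv ⟨i, hi⟩
    rw [mulVec_add, mulVec_extend_zero A he, mulVec_single_one, Pi.add_apply, hvi, col_apply,
      neg_add_cancel]

lemma exists_mul_isLowerTriangular (A : Matrix (Fin n) (Fin n) R)
    (hA : ∀ k : Fin n, IsUnit (leadingPrincipalMinor A k k.isLt.le)) :
    ∃ U, IsUnitUpperTriangular U ∧ (A * U).IsLowerTriangular := by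
  choose u h_one h_upper h_zero using fun k => exists_mulVec_eq_zero_of_lt A k (hA k)
  exact ⟨(Matrix.of u)ᵀ, ⟨h_one, fun i k hki => h_upper k i hki⟩, fun i k hik => h_zero k i hik⟩

lemma exists_transpose_mul_mul_eq_diagonal (A : Matrix (Fin n) (Fin n) R)
    (hA : ∀ k : Fin n, IsUnit (leadingPrincipalMinor A k k.isLt.le)) :
    ∃ V U d, IsUnitUpperTriangular V ∧ IsUnitUpperTriangular U ∧ Vᵀ * A * U = diagonal d := by
  obtain ⟨U, hU, hAU⟩ := exists_mul_isLowerTriangular A hA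
  obtain ⟨V, hV, hAUV⟩ := exists_mul_isLowerTriangular (A * U)ᵀ fun k => by
    rw [leadingPrincipalMinor_transpose, hU.leadingPrincipalMinor_mul]
    exact hA k
  have upper : ((A * U)ᵀ * V).IsUpperTriangular := hAU.transpose.mul hV.isUpperTriangular
  have diag : ((A * U)ᵀ * V).IsDiag := fun i j hij =>
    hij.lt_or_gt.elim (fun hlt => hAUV hlt) (fun hgt => upper hgt)
  refine ⟨V, U, ((A * U)ᵀ * V).diag, hV, hU, ?_⟩
  rw [← diagonal_transpose, diag.diagonal_diag, transpose_mul, transpose_transpose,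
    Matrix.mul_assoc]

lemma exists_transpose_mul_mul_eq_transpose_mul_mul {A B : Matrix (Fin n) (Fin n) R}
    (hA : ∀ k : Fin n, IsUnit (leadingPrincipalMinor A k k.isLt.le))
    (hAB : ∀ s (h : s ≤ n), leadingPrincipalMinor A s h = leadingPrincipalMinor B s h) :
    ∃ V U V' U', IsUnitUpperTriangular V ∧ IsUnitUpperTriangular U ∧
      IsUnitUpperTriangular V' ∧ IsUnitUpperTriangular U' ∧ Vᵀ * A * U = V'ᵀ * B * U' := by
  obtain ⟨V, U, d, hV, hU, hd⟩ := exists_transpose_mul_mul_eq_diagonal A hA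
  obtain ⟨V', U', e, hV', hU', he⟩ := exists_transpose_mul_mul_eq_diagonal B fun k => by
    rw [← hAB]
    exact hA k
  have minor_d : ∀ s (h : s ≤ n),
      leadingPrincipalMinor (diagonal d) s h = leadingPrincipalMinor A s h := fun s h => by
    rw [← hd, hU.leadingPrincipalMinor_mul, hV.leadingPrincipalMinor_transpose_mul]
  have minor_e : ∀ s (h : s ≤ n),
      leadingPrincipalMinor (diagonal e) s h = leadingPrincipalMinor B s h := fun s h => by
    rw [← he, hU'.leadingPrincipalMinor_mul, hV'.leadingPrincipalMinor_transpose_mul]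
  have hde : d = e := diagonal_eq_of_leadingPrincipalMinor_eq
    (fun k => by rw [minor_d]; exact hA k) fun s h => by rw [minor_d, minor_e, hAB]
  exact ⟨V, U, V', U', hV, hU, hV', hU', by rw [hd, he, hde]⟩

end GaussDecomposition

section MinorSection

variable {R S : Type*} [CommRing R] [CommRing S] {n : ℕ}

/-- The matrix with first row `t`, entries `-1` just below the diagonal, and `0` elsewhere. Its
leading principal minors are the entries of `t`, so it is a polynomial section of the map sending
a matrix to its leading principal minors. -/
def minorSection (t : Fin n → R) : Matrix (Fin n) (Fin n) R :=
  Matrix.of fun i j => if (i : ℕ) = 0 then t j else if (i : ℕ) = j + 1 then -1 else 0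

lemma map_minorSection (f : R →+* S) (t : Fin n → R) (i j : Fin n) :
    f (minorSection t i j) = minorSection (f ∘ t) i j := by
  simp only [minorSection, of_apply, apply_ite f, map_neg, map_one, map_zero, Function.comp_apply]

lemma minorSection_submatrix_succ_castSucc (t : Fin (n + 1) → R) :
    (minorSection t).submatrix Fin.succ Fin.castSucc = diagonal fun _ => -1 := by
  ext i j
  simp only [minorSection, submatrix_apply, of_apply, diagonal_apply, Fin.val_succ,
    Fin.val_castSucc, Nat.succ_ne_zero, if_false, add_left_inj, Fin.ext_iff]

lemma det_minorSection (t : Fin (n + 1) → R) : (minorSection t).det = t (Fin.last n) := by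
  have last_column : ∀ i ≠ 0, minorSection t i (Fin.last n) = 0 := fun i hi => by
    rw [minorSection, of_apply, if_neg (Fin.val_ne_zero_iff.2 hi), Fin.val_last,
      if_neg i.isLt.ne]
  have corner : minorSection t 0 (Fin.last n) = t (Fin.last n) := by
    rw [minorSection, of_apply, Fin.val_zero, if_pos rfl]
  have det_minor : ((minorSection t).submatrix (Fin.succAbove 0)
      (Fin.last n).succAbove).det = (-1) ^ n := by
    rw [Fin.succAbove_last, funext Fin.succAbove_zero_apply,
      minorSection_submatrix_succ_castSucc, det_diagonal, Finset.prod_const, Finset.card_fin]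
  rw [det_succ_column _ (Fin.last n), Finset.sum_eq_single 0
    (fun i _ hi => by rw [last_column i hi, mul_zero, zero_mul]) (by simp), corner, det_minor,
    Fin.val_zero, Fin.val_last, zero_add, mul_right_comm, ← pow_add,
    Even.neg_one_pow ⟨n, rfl⟩, one_mul]

lemma leadingPrincipalMinor_minorSection (t : Fin n → R) (k : Fin n) :
    leadingPrincipalMinor (minorSection t) (k + 1) k.isLt = t k :=
  det_minorSection fun i => t (Fin.castLE k.isLt i)

/-- Extension of the minors of order less than `n` by the value `1` of the minor of order `n`,
the determinant. The entry with index `k` stands for the minor of order `k + 1`. -/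
def appendOne (t : Fin (n - 1) → R) (k : Fin n) : R :=
  if h : (k : ℕ) < n - 1 then t ⟨k, h⟩ else 1

lemma map_comp_appendOne (f : R →+* S) (t : Fin (n - 1) → R) :
    f ∘ appendOne t = appendOne (f ∘ t) := by
  funext k
  simp only [appendOne, Function.comp_apply, apply_dite f, map_one]

lemma leadingPrincipalMinor_minorSection_appendOne {A : Matrix (Fin n) (Fin n) R}
    (hA : A.det = 1) (s : ℕ) (h : s ≤ n) :
    leadingPrincipalMinor (minorSection (appendOne fun k : Fin (n - 1) =>
      leadingPrincipalMinor A (k + 1) (Nat.add_lt_of_lt_sub k.isLt).le)) s h =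
        leadingPrincipalMinor A s h := by
  obtain _ | k := s
  · rw [leadingPrincipalMinor_zero, leadingPrincipalMinor_zero]
  rw [leadingPrincipalMinor_minorSection _ ⟨k, h⟩, appendOne]
  split_ifs with hk
  · rfl
  · obtain rfl : n = k + 1 := h.antisymm (Nat.le_add_of_sub_le (not_lt.1 hk)) |>.symm
    rw [leadingPrincipalMinor_self, hA]

end MinorSection

section Density

open Polynomial

variable {K : Type*} [Field K] {n : ℕ}

lemma exists_polynomial_path_from_isUpperTriangular {m : Type*} [Fintype m] [LinearOrder m]
    {A : Matrix m m K} (hA : A.det = 1) :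
    ∃ γ : Matrix m m K[X], γ.det = 1 ∧
      ((evalRingHom 0).mapMatrix γ).IsUpperTriangular ∧ (evalRingHom 1).mapMatrix γ = A := by
  apply diagonal_transvection_induction _ A
  · intro d hd
    have map_diagonal (x : K) :
        (evalRingHom x).mapMatrix (diagonal fun i => C (d i)) = diagonal d := by
      simp [diagonal_map]
    refine ⟨diagonal fun i => C (d i), ?_, ?_, map_diagonal 1⟩
    · rw [hA, det_diagonal] at hd
      rw [det_diagonal, ← map_prod, hd, map_one]
    · rw [map_diagonal]
      exact blockTriangular_diagonal d
  · rintro ⟨i, j, hij, c⟩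
    have map_transvection (x : K) :
        (evalRingHom x).mapMatrix (transvection i j (C c * X)) = transvection i j (c * x) := by
      rw [transvection, map_add, map_one, RingHom.mapMatrix_apply, map_single]
      simp [transvection]
    refine ⟨transvection i j (C c * X), det_transvection_of_ne i j hij _, ?_, ?_⟩
    · rw [map_transvection, mul_zero, transvection_zero]
      exact blockTriangular_one
    · rw [map_transvection, mul_one, TransvectionStruct.toMatrix_mk]
  · rintro _ _ ⟨γ, hγ, hγ₀, rfl⟩ ⟨δ, hδ, hδ₀, rfl⟩
    refine ⟨γ * δ, by rw [det_mul, hγ, hδ, mul_one], ?_, map_mul _ γ δ⟩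
    rw [map_mul]
    exact hγ₀.mul hδ₀

lemma exists_polynomial_path_leadingPrincipalMinor_ne_zero {A : Matrix (Fin n) (Fin n) K}
    (hA : A.det = 1) :
    ∃ γ : Matrix (Fin n) (Fin n) K[X], γ.det = 1 ∧
      (∀ s (h : s ≤ n), leadingPrincipalMinor γ s h ≠ 0) ∧ (evalRingHom 1).mapMatrix γ = A := by
  obtain ⟨γ, hγ, hγ₀, hγ₁⟩ := exists_polynomial_path_from_isUpperTriangular hA
  refine ⟨γ, hγ, fun s h hzero => ?_, hγ₁⟩
  have det_isUnit : IsUnit ((evalRingHom 0).mapMatrix γ).det := by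
    rw [← RingHom.map_det, hγ, map_one]
    exact isUnit_one
  have minor_isUnit := isUnit_leadingPrincipalMinor_of_isUpperTriangular hγ₀ det_isUnit h
  rw [leadingPrincipalMinor_mapMatrix, hzero, map_zero] at minor_isUnit
  exact not_isUnit_zero minor_isUnit

lemma eval_eq_of_forall_leadingPrincipalMinor_ne_zero [Infinite K]
    {F G : MvPolynomial (Fin n × Fin n) K}
    (hFG : ∀ A : Matrix (Fin n) (Fin n) K, A.det = 1 →
      (∀ s (h : s ≤ n), leadingPrincipalMinor A s h ≠ 0) →
      MvPolynomial.eval (fun p => A p.1 p.2) F = MvPolynomial.eval (fun p => A p.1 p.2) G)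
    {A : Matrix (Fin n) (Fin n) K} (hA : A.det = 1) :
    MvPolynomial.eval (fun p => A p.1 p.2) F = MvPolynomial.eval (fun p => A p.1 p.2) G := by
  obtain ⟨γ, hγ, hminor, rfl⟩ := exists_polynomial_path_leadingPrincipalMinor_ne_zero hA
  have det_at (x : K) : ((evalRingHom x).mapMatrix γ).det = 1 := by
    rw [← RingHom.map_det, hγ, map_one]
  let alongPath (P : MvPolynomial (Fin n × Fin n) K) : K[X] :=
    MvPolynomial.aeval (fun p => γ p.1 p.2) P
  have eval_alongPath (x : K) (P : MvPolynomial (Fin n × Fin n) K) : (alongPath P).eval x =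
      MvPolynomial.eval (fun p => (evalRingHom x).mapMatrix γ p.1 p.2) P := by
    rw [← coe_aeval_eq_eval, MvPolynomial.comp_aeval_apply, MvPolynomial.aeval_eq_eval]
    rfl
  let minors : K[X] := ∏ s : Fin (n + 1), leadingPrincipalMinor γ s s.is_le
  have minors_ne_zero : minors ≠ 0 := Finset.prod_ne_zero_iff.2 fun s _ => hminor s s.is_le
  have alongPath_eq : alongPath F = alongPath G := by
    refine mul_right_cancel₀ minors_ne_zero (Polynomial.funext fun x => ?_)
    rw [eval_mul, eval_mul, mul_eq_mul_right_iff, or_iff_not_imp_right, eval_prod,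
      ← Ne, Finset.prod_ne_zero_iff, eval_alongPath, eval_alongPath]
    refine fun hx => hFG _ (det_at x) fun s h => ?_
    rw [leadingPrincipalMinor_mapMatrix]
    exact hx ⟨s, Nat.lt_succ_of_le h⟩ (Finset.mem_univ _)
  rw [← eval_alongPath, alongPath_eq, eval_alongPath]

end Density

section Biinvariant

variable {R : Type*} [CommRing R] {n : ℕ}

/-- The function on `SL(n, R)` given by the polynomial `F` in the matrix entries is invariant
under `g ↦ ᵗn₁ · g · n₂` for all upper triangular `n₁, n₂` with unit diagonal. -/
def IsUnitriangularBiinvariant (F : MvPolynomial (Fin n × Fin n) R) : Prop :=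
  ∀ (g : SpecialLinearGroup (Fin n) R) (n₁ n₂ : Matrix (Fin n) (Fin n) R),
    IsUnitUpperTriangular n₁ → IsUnitUpperTriangular n₂ →
    MvPolynomial.eval (fun p => (n₁ᵀ * (g : Matrix (Fin n) (Fin n) R) * n₂) p.1 p.2) F =
      MvPolynomial.eval (fun p => g p.1 p.2) F

lemma IsUnitriangularBiinvariant.eval_eq_of_leadingPrincipalMinor_eq
    {F : MvPolynomial (Fin n × Fin n) R} (hF : IsUnitriangularBiinvariant F)
    {A B : Matrix (Fin n) (Fin n) R} (hdet : A.det = 1)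
    (hA : ∀ k : Fin n, IsUnit (leadingPrincipalMinor A k k.isLt.le))
    (hAB : ∀ s (h : s ≤ n), leadingPrincipalMinor A s h = leadingPrincipalMinor B s h) :
    MvPolynomial.eval (fun p => A p.1 p.2) F = MvPolynomial.eval (fun p => B p.1 p.2) F := by
  obtain ⟨V, U, V', U', hV, hU, hV', hU', h⟩ :=
    exists_transpose_mul_mul_eq_transpose_mul_mul hA hAB
  have hdetB : B.det = 1 := (hAB n le_rfl).symm.trans hdet
  have invariant_A := hF ⟨A, hdet⟩ V U hV hU
  have invariant_B := hF ⟨B, hdetB⟩ V' U' hV' hU'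
  rw [h] at invariant_A
  exact invariant_A.symm.trans invariant_B

lemma eval_bind₁ {σ τ : Type*} (t : τ → R) (f : σ → MvPolynomial τ R) (F : MvPolynomial σ R) :
    MvPolynomial.eval t (MvPolynomial.bind₁ f F) =
      MvPolynomial.eval (fun i => MvPolynomial.eval t (f i)) F :=
  MvPolynomial.eval₂Hom_bind₁ (RingHom.id R) t f F

lemma eval_leadingPrincipalMinor_mvPolynomialX (A : Matrix (Fin n) (Fin n) R) {s : ℕ}
    (h : s ≤ n) :
    MvPolynomial.eval (fun p => A p.1 p.2)
      (leadingPrincipalMinor (mvPolynomialX (Fin n) (Fin n) R) s h) =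
        leadingPrincipalMinor A s h := by
  rw [← leadingPrincipalMinor_mapMatrix, mvPolynomialX_mapMatrix_eval]

end Biinvariant

theorem biinvariant_is_polynomial_in_leading_minors_general {K : Type*} [Field K] [Infinite K]
    {n : ℕ} {F : MvPolynomial (Fin n × Fin n) K} (hF : IsUnitriangularBiinvariant F) :
    ∃ Φ : MvPolynomial (Fin (n - 1)) K, ∀ g : SpecialLinearGroup (Fin n) K,
      MvPolynomial.eval (fun p => g p.1 p.2) F =
        MvPolynomial.eval (fun k : Fin (n - 1) =>
          leadingPrincipalMinor (g : Matrix (Fin n) (Fin n) K) (k + 1)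
            (Nat.add_lt_of_lt_sub k.isLt).le) Φ := by
  let Φ : MvPolynomial (Fin (n - 1)) K :=
    MvPolynomial.bind₁ (fun p => minorSection (appendOne MvPolynomial.X) p.1 p.2) F
  have eval_Φ (t : Fin (n - 1) → K) : MvPolynomial.eval t Φ =
      MvPolynomial.eval (fun p => minorSection (appendOne t) p.1 p.2) F := by
    simp only [Φ, eval_bind₁, map_minorSection, map_comp_appendOne]
    simp only [Function.comp_def, MvPolynomial.eval_X]
  let G : MvPolynomial (Fin n × Fin n) K := MvPolynomial.bind₁ (fun k : Fin (n - 1) =>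
    leadingPrincipalMinor (mvPolynomialX _ _ K) (k + 1) (Nat.add_lt_of_lt_sub k.isLt).le) Φ
  have eval_G (A : Matrix (Fin n) (Fin n) K) : MvPolynomial.eval (fun p => A p.1 p.2) G =
      MvPolynomial.eval (fun k : Fin (n - 1) =>
        leadingPrincipalMinor A (k + 1) (Nat.add_lt_of_lt_sub k.isLt).le) Φ := by
    simp only [G, eval_bind₁, eval_leadingPrincipalMinor_mvPolynomialX]
  refine ⟨Φ, fun g => ?_⟩
  rw [← eval_G]
  refine eval_eq_of_forall_leadingPrincipalMinor_ne_zero (fun A hdet hA => ?_) g.prop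
  rw [eval_G, eval_Φ]
  exact hF.eval_eq_of_leadingPrincipalMinor_eq hdet (fun k => (hA k k.isLt.le).isUnit)
    fun s h => (leadingPrincipalMinor_minorSection_appendOne hdet s h).symm

/-- A polynomial function on `SL(n, ℂ)` which is invariant under
`g ↦ ᵗn₁ · g · n₂` for all upper triangular `n₁, n₂` with unit diagonal is a
polynomial in the leading principal minors `δ^(1)_1, …, δ^(n−1)_{1,…,n−1}`. -/
theorem biinvariant_is_polynomial_in_leading_minors (n : ℕ)
    (F : MvPolynomial (Fin n × Fin n) ℂ)
    (hF : ∀ (g : Matrix.SpecialLinearGroup (Fin n) ℂ) (n₁ n₂ : Matrix (Fin n) (Fin n) ℂ),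
      (∀ k, n₁ k k = 1) → (∀ k l : Fin n, l < k → n₁ k l = 0) →
      (∀ k, n₂ k k = 1) → (∀ k l : Fin n, l < k → n₂ k l = 0) →
      evalMat F (n₁ᵀ * (g : Matrix (Fin n) (Fin n) ℂ) * n₂) =
        evalMat F (g : Matrix (Fin n) (Fin n) ℂ)) :
    ∃ Φ : MvPolynomial (Fin (n - 1)) ℂ,
      ∀ g : Matrix.SpecialLinearGroup (Fin n) ℂ,
        evalMat F (g : Matrix (Fin n) (Fin n) ℂ) =
          MvPolynomial.eval
            (fun s : Fin (n - 1) =>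
              leadingMinor (g : Matrix (Fin n) (Fin n) ℂ) ((s : ℕ) + 1)) Φ := by
  obtain ⟨Φ, hΦ⟩ := biinvariant_is_polynomial_in_leading_minors_general
    fun g n₁ n₂ h₁ h₂ => hF g n₁ n₂ h₁.1 h₁.2 h₂.1 h₂.2
  exact ⟨Φ, fun g => (hΦ g).trans (by simp only [leadingPrincipalMinor_eq_leadingMinor])⟩
end
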